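/- Let I ⊂ ℝ be a bounded open interval, φ : I → ℝ a convex C² function, κ = φ'', and U = {x ∈ I : κ(x) > 0}. Let 1 ≤ r < 2. Then there is a constant C_r, depending only on r, such that for every measurable g : I → ℂ, ∬_{U×U, x≠y} (|g(x)|^r |g(y)|^r κ(x)^{r/3} κ(y)^{r/3}) / |φ'(x) − φ'(y)|^{r−1} dx dy ≤ C_r ( ∫_U |g(x)|^{2r/(3−r)} κ(x)^{1/3} dx )^{3−r}. -/

import Mathlib

open MeasureTheory Set

/-!
Since `φ'` is nondecreasing on `U` with derivative `κ`, it pushes the measure `κ dx` on `U` forward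
to at most Lebesgue measure. The claim is therefore the Hardy–Littlewood–Sobolev inequality for the
kernel `|u - v| ^ (-(r - 1))` and `f = |g| ^ r * κ ^ (r / 3 - 1)`, transported along `φ'`.

By symmetry it suffices to integrate over the pairs with `f y ≤ f x`. For fixed `x` the inner
integral is split at the distance `ρ` from `φ' x`: close to it one has `f y ≤ f x` and the kernel is
integrable, away from it Hölder's inequality applies. Choosing `ρ` so that both parts have the same
size bounds the inner integral by a multiple of `f x ^ (p - 1)`, where `p = 2 / (3 - r)`.
-/

open Metric Module
open scoped ENNReal

section PowerIntegrals

lemma lintegral_Ioc_ofReal_rpow {a ρ : ℝ} (ha : -1 < a) (hρ : 0 ≤ ρ) :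
    ∫⁻ t in Ioc 0 ρ, ENNReal.ofReal (t ^ a) = ENNReal.ofReal (ρ ^ (a + 1) / (a + 1)) := by
  have hint : IntegrableOn (fun t : ℝ => t ^ a) (Ioc 0 ρ) :=
    (intervalIntegrable_iff_integrableOn_Ioc_of_le hρ).1
      (intervalIntegral.intervalIntegrable_rpow' ha)
  rw [← ofReal_integral_eq_lintegral_ofReal hint, ← intervalIntegral.integral_of_le hρ,
    integral_rpow (Or.inl ha), Real.zero_rpow (by linarith), sub_zero]
  filter_upwards [ae_restrict_mem measurableSet_Ioc] with t ht
  exact Real.rpow_nonneg ht.1.le a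

lemma lintegral_Ioi_ofReal_rpow {a ρ : ℝ} (ha : a < -1) (hρ : 0 < ρ) :
    ∫⁻ t in Ioi ρ, ENNReal.ofReal (t ^ a) = ENNReal.ofReal (-ρ ^ (a + 1) / (a + 1)) := by
  rw [← ofReal_integral_eq_lintegral_ofReal (integrableOn_Ioi_rpow_of_lt ha hρ),
    integral_Ioi_rpow_of_lt ha hρ]
  filter_upwards [ae_restrict_mem measurableSet_Ioi] with t ht
  exact Real.rpow_nonneg (hρ.trans ht).le a

end PowerIntegrals

section RieszKernel

variable {E : Type*} [NormedAddCommGroup E] [NormedSpace ℝ E] [FiniteDimensional ℝ E]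
  [Nontrivial E] [MeasurableSpace E] [BorelSpace E] (ν : Measure E) [ν.IsAddHaarMeasure]

lemma lintegral_comp_norm {f : ℝ → ℝ≥0∞} (hf : Measurable f) :
    ∫⁻ u, f ‖u‖ ∂ν = finrank ℝ E * ν (ball 0 1) *
      ∫⁻ t in Ioi 0, ENNReal.ofReal (t ^ (finrank ℝ E - 1)) * f t :=
  calc
    ∫⁻ u, f ‖u‖ ∂ν = ∫⁻ u : ({0}ᶜ : Set E), f ‖u.1‖ ∂(ν.comap (↑)) := by
      rw [lintegral_subtype_comap (measurableSet_singleton _).compl fun u => f ‖u‖,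
        restrict_compl_singleton]
    _ = ∫⁻ z, f z.2 ∂ν.toSphere.prod (.volumeIoiPow (finrank ℝ E - 1)) := by
      simpa using ν.measurePreserving_homeomorphUnitSphereProd.lintegral_comp_emb
        (Homeomorph.measurableEmbedding _) (f ∘ Subtype.val ∘ Prod.snd)
    _ = ν.toSphere univ * ∫⁻ t : Ioi (0 : ℝ), f t ∂.volumeIoiPow (finrank ℝ E - 1) := by
      have hsnd : Measurable fun z : sphere (0 : E) 1 × Ioi (0 : ℝ) => f z.2 :=
        hf.comp (measurable_subtype_coe.comp measurable_snd)
      simp only [lintegral_prod _ hsnd.aemeasurable, lintegral_const, mul_comm]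
    _ = _ := by
      rw [ν.toSphere_apply_univ, Measure.volumeIoiPow,
        lintegral_withDensity_eq_lintegral_mul _ (by fun_prop) (by fun_prop)]
      congr 1
      exact lintegral_subtype_comap measurableSet_Ioi
        fun t : ℝ => ENNReal.ofReal (t ^ (finrank ℝ E - 1)) * f t

lemma lintegral_preimage_dist_enorm_rpow {s : Set ℝ} (hs : MeasurableSet s) (c : E) (a : ℝ) :
    ∫⁻ u in (dist c) ⁻¹' s, ‖c - u‖ₑ ^ a ∂ν = finrank ℝ E * ν (ball 0 1) *
      ∫⁻ t in Ioi 0 ∩ s, ENNReal.ofReal (t ^ (finrank ℝ E - 1 + a)) := by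
  set f : ℝ → ℝ≥0∞ := s.indicator fun t => ENNReal.ofReal t ^ a
  have hf : Measurable f := Measurable.indicator (by fun_prop) hs
  calc
    _ = ∫⁻ u, f ‖u - c‖ ∂ν := by
      rw [← lintegral_indicator (hs.preimage (by fun_prop))]
      refine lintegral_congr fun u => ?_
      classical
      simp only [f, indicator_apply, mem_preimage, dist_eq_norm', ofReal_norm, enorm_sub_rev u]
    _ = ∫⁻ u, f ‖u‖ ∂ν := lintegral_sub_right_eq_self (fun u => f ‖u‖) c
    _ = _ := by
      rw [lintegral_comp_norm ν hf, inter_comm, ← setLIntegral_indicator hs]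
      congr 1
      refine setLIntegral_congr_fun measurableSet_Ioi fun t (ht : 0 < t) => ?_
      by_cases hts : t ∈ s
      · simp only [f, indicator_of_mem hts]
        rw [ENNReal.ofReal_rpow_of_pos ht, ← ENNReal.ofReal_mul (by positivity),
          ← Real.rpow_natCast, ← Real.rpow_add ht, Nat.cast_pred finrank_pos]
      · simp only [f, indicator_of_notMem hts, mul_zero]

lemma setLIntegral_closedBall_enorm_rpow {θ ρ : ℝ} (hθ : θ < 1) (hρ : 0 ≤ ρ) (c : E) :
    ∫⁻ u in closedBall c ρ, ‖c - u‖ₑ ^ (-(θ * finrank ℝ E)) ∂ν =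
      ν (ball 0 1) / ENNReal.ofReal (1 - θ) * ENNReal.ofReal (ρ ^ finrank ℝ E) ^ (1 - θ) := by
  have hd : (0 : ℝ) < finrank ℝ E := mod_cast finrank_pos
  have hθ' : 0 < 1 - θ := sub_pos.2 hθ
  have hball : closedBall c ρ = dist c ⁻¹' Iic ρ := by ext; simp [dist_comm]
  have hexp : (finrank ℝ E : ℝ) - 1 + -(θ * finrank ℝ E) + 1 = finrank ℝ E * (1 - θ) := by ring
  have hscale : (finrank ℝ E : ℝ) * (ρ ^ (finrank ℝ E * (1 - θ)) / (finrank ℝ E * (1 - θ))) =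
      (ρ ^ finrank ℝ E) ^ (1 - θ) / (1 - θ) := by
    rw [Real.rpow_mul hρ, Real.rpow_natCast]
    field_simp
  rw [hball, lintegral_preimage_dist_enorm_rpow ν measurableSet_Iic, Ioi_inter_Iic,
    lintegral_Ioc_ofReal_rpow (by nlinarith) hρ, hexp, mul_comm _ (ν _), mul_assoc,
    ← ENNReal.ofReal_natCast, ← ENNReal.ofReal_mul hd.le, hscale, ENNReal.ofReal_div_of_pos hθ',
    ENNReal.ofReal_rpow_of_nonneg (by positivity) hθ'.le, ← mul_div_assoc,
    ENNReal.mul_div_right_comm]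

lemma setLIntegral_compl_closedBall_enorm_rpow {ρ : ℝ} (hρ : 0 < ρ) (c : E) :
    ∫⁻ u in (closedBall c ρ)ᶜ, ‖c - u‖ₑ ^ (-(2 * finrank ℝ E) : ℝ) ∂ν =
      ν (ball 0 1) / ENNReal.ofReal (ρ ^ finrank ℝ E) := by
  have hd : (0 : ℝ) < finrank ℝ E := mod_cast finrank_pos
  have hball : (closedBall c ρ)ᶜ = dist c ⁻¹' Ioi ρ := by ext; simp [dist_comm]
  have hexp : (finrank ℝ E : ℝ) - 1 + -(2 * finrank ℝ E) + 1 = -finrank ℝ E := by ring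
  have hscale : (finrank ℝ E : ℝ) * (-ρ ^ (-finrank ℝ E : ℝ) / -finrank ℝ E) =
      (ρ ^ finrank ℝ E)⁻¹ := by
    rw [Real.rpow_neg hρ.le, Real.rpow_natCast]
    field_simp
  rw [hball, lintegral_preimage_dist_enorm_rpow ν measurableSet_Ioi, Ioi_inter_Ioi,
    sup_eq_right.2 hρ.le, lintegral_Ioi_ofReal_rpow (by linarith) hρ, hexp, mul_comm _ (ν _),
    mul_assoc, ← ENNReal.ofReal_natCast, ← ENNReal.ofReal_mul hd.le, hscale,
    ENNReal.ofReal_inv_of_pos (by positivity), div_eq_mul_inv]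

end RieszKernel

section HardyLittlewoodSobolev

lemma lintegral_prod_le_two_mul_setLIntegral_of_symm {α β : Type*} [MeasurableSpace α]
    [LinearOrder β] {μ : Measure α} [SFinite μ] (f : α → β) {H : α × α → ℝ≥0∞}
    (hH : ∀ p, H p.swap = H p) :
    ∫⁻ p, H p ∂μ.prod μ ≤ 2 * ∫⁻ p in {p | f p.2 ≤ f p.1}, H p ∂μ.prod μ := by
  set S : Set (α × α) := {p | f p.2 ≤ f p.1}
  have hcover : S ∪ Prod.swap ⁻¹' S = univ :=
    eq_univ_of_forall fun p => le_total (f p.2) (f p.1)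
  calc
    ∫⁻ p, H p ∂μ.prod μ = ∫⁻ p in S ∪ Prod.swap ⁻¹' S, H p ∂μ.prod μ := by
      rw [hcover, setLIntegral_univ]
    _ ≤ ∫⁻ p in S, H p ∂μ.prod μ + ∫⁻ p in Prod.swap ⁻¹' S, H p ∂μ.prod μ :=
      lintegral_union_le _ _ _
    _ = 2 * ∫⁻ p in S, H p ∂μ.prod μ := by
      have hswap := Measure.measurePreserving_swap.setLIntegral_comp_preimage_emb
        (μ := μ.prod μ) (ν := μ.prod μ) MeasurableEquiv.prodComm.measurableEmbedding H S
      simp only [hH] at hswap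
      rw [hswap, two_mul]

lemma setLIntegral_preimage_comp_le_of_map_le {α E : Type*} [MeasurableSpace α]
    [MeasurableSpace E] {μ : Measure α} {ν : Measure E} {ψ : α → E} (hψ : Measurable ψ)
    (hμ : μ.map ψ ≤ ν) {s : Set E} (hs : MeasurableSet s) {h : E → ℝ≥0∞} (hh : Measurable h) :
    ∫⁻ y in ψ ⁻¹' s, h (ψ y) ∂μ ≤ ∫⁻ u in s, h u ∂ν := by
  rw [← setLIntegral_map hs hh hψ]
  exact lintegral_mono' (Measure.restrict_mono subset_rfl hμ) le_rfl

lemma exists_pos_ofReal_pow_eq {M : ℝ≥0∞} (hM₀ : M ≠ 0) (hM : M ≠ ∞) {n : ℕ} (hn : n ≠ 0) :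
    ∃ ρ : ℝ, 0 < ρ ∧ ENNReal.ofReal (ρ ^ n) = M := by
  have hM_pos : 0 < M.toReal := ENNReal.toReal_pos hM₀ hM
  exact ⟨M.toReal ^ (n : ℝ)⁻¹, by positivity,
    by rw [Real.rpow_inv_natCast_pow hM_pos.le hn, ENNReal.ofReal_toReal hM]⟩

lemma rpow_mul_rpow_mul_div_rpow {N t : ℝ≥0∞} (hN₀ : N ≠ 0) (hN : N ≠ ∞) (ht₀ : t ≠ 0)
    (ht : t ≠ ∞) (a b c p : ℝ) :
    t ^ b * N ^ c * (N / t ^ p) ^ a = N ^ (c + a) * t ^ (b - p * a) := by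
  rw [div_eq_mul_inv, ← ENNReal.rpow_neg, ENNReal.mul_rpow_of_ne_zero hN₀ (by simp [*]),
    ← ENNReal.rpow_mul, ENNReal.rpow_add _ _ hN₀ hN, sub_eq_add_neg, ENNReal.rpow_add _ _ ht₀ ht,
    neg_mul]
  ring

section Constant

variable {E : Type*} [NormedAddCommGroup E] [MeasurableSpace E]

/-- A constant for the Hardy–Littlewood–Sobolev inequality with kernel `‖u - v‖ ^ (-(θ * d))` on a
space of dimension `d` with Haar measure `ν`. The first summand comes from the part of the kernel
near the diagonal, the second from Hölder's inequality away from it, and the factor `2` from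
restricting to half of the pairs. It is meaningful for `0 ≤ θ < 1`, and `ℝ≥0∞`-valued because
`ν` is. -/
noncomputable def hlsConst (ν : Measure E) (θ : ℝ) : ℝ≥0∞ :=
  2 * (ν (ball 0 1) / ENNReal.ofReal (1 - θ) + ν (ball 0 1) ^ (θ / 2))

lemma hlsConst_ne_zero {ν : Measure E} [ν.IsOpenPosMeasure] {θ : ℝ} : hlsConst ν θ ≠ 0 := by
  have hV : ν (ball 0 1) ≠ 0 := (measure_ball_pos ν 0 one_pos).ne'
  simp [hlsConst, ENNReal.div_eq_zero_iff, hV]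

lemma hlsConst_ne_top [ProperSpace E] {ν : Measure E} [IsFiniteMeasureOnCompacts ν] {θ : ℝ}
    (hθ₀ : 0 ≤ θ) (hθ₁ : θ < 1) : hlsConst ν θ ≠ ∞ := by
  have hV : ν (ball 0 1) ≠ ∞ := measure_ball_lt_top.ne
  exact ENNReal.mul_ne_top ENNReal.ofNat_ne_top (ENNReal.add_ne_top.2
    ⟨ENNReal.div_ne_top hV (by simpa using hθ₁),
      ENNReal.rpow_ne_top_of_nonneg (by positivity) hV⟩)

lemma one_le_hlsConst_zero {ν : Measure E} : 1 ≤ hlsConst ν 0 := by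
  simp only [hlsConst, zero_div, ENNReal.rpow_zero]
  exact le_mul_of_one_le_of_le one_le_two le_add_self

end Constant

variable {E : Type*} [NormedAddCommGroup E] [NormedSpace ℝ E] [FiniteDimensional ℝ E]
  [Nontrivial E] [MeasurableSpace E] [BorelSpace E] {ν : Measure E} [ν.IsAddHaarMeasure]
  {α : Type*} [MeasurableSpace α] {μ : Measure α} {ψ : α → E} {f : α → ℝ≥0∞} {θ : ℝ}

lemma setLIntegral_compl_closedBall_mul_enorm_rpow_le (hθ₀ : 0 < θ) (hθ₁ : θ < 1)
    (hψ : Measurable ψ) (hμ : μ.map ψ ≤ ν) (hf : Measurable f) (c : E) {ρ : ℝ} (hρ : 0 < ρ) :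
    ∫⁻ y in ψ ⁻¹' (closedBall c ρ)ᶜ, f y * ‖c - ψ y‖ₑ ^ (-(θ * finrank ℝ E)) ∂μ ≤
      (∫⁻ y, f y ^ (2 / (2 - θ)) ∂μ) ^ (1 - θ / 2) *
        (ν (ball 0 1) / ENNReal.ofReal (ρ ^ finrank ℝ E)) ^ (θ / 2) := by
  have hconj : (2 / (2 - θ)).HolderConjugate (2 / θ) := by
    rw [Real.holderConjugate_iff]
    have : 2 - θ ≠ 0 := by linarith
    exact ⟨by rw [lt_div_iff₀] <;> linarith, by field_simp; ring⟩
  have hkernel : ∀ y, (‖c - ψ y‖ₑ ^ (-(θ * finrank ℝ E))) ^ (2 / θ) =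
      ‖c - ψ y‖ₑ ^ (-(2 * finrank ℝ E) : ℝ) := fun y => by
    rw [← ENNReal.rpow_mul]
    congr 1
    field_simp
  have hfar := (setLIntegral_preimage_comp_le_of_map_le hψ hμ measurableSet_closedBall.compl
    (show Measurable fun u => ‖c - u‖ₑ ^ (-(2 * finrank ℝ E) : ℝ) by fun_prop)).trans_eq
      (setLIntegral_compl_closedBall_enorm_rpow ν hρ c)
  refine (ENNReal.lintegral_mul_le_Lp_mul_Lq _ hconj hf.aemeasurable (by fun_prop)).trans ?_
  simp only [hkernel, one_div_div]
  rw [show (2 - θ) / 2 = 1 - θ / 2 by ring]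
  gcongr
  · linarith
  · exact Measure.restrict_le_self

lemma setLIntegral_sublevel_mul_enorm_rpow_le (hθ₀ : 0 < θ) (hθ₁ : θ < 1) (hψ : Measurable ψ)
    (hμ : μ.map ψ ≤ ν) (hf : Measurable f) (c : E) (t : ℝ≥0∞) {ρ : ℝ} (hρ : 0 < ρ) :
    ∫⁻ y in {y | f y ≤ t}, f y * ‖c - ψ y‖ₑ ^ (-(θ * finrank ℝ E)) ∂μ ≤
      t * (ν (ball 0 1) / ENNReal.ofReal (1 - θ) *
        ENNReal.ofReal (ρ ^ finrank ℝ E) ^ (1 - θ)) +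
      (∫⁻ y, f y ^ (2 / (2 - θ)) ∂μ) ^ (1 - θ / 2) *
        (ν (ball 0 1) / ENNReal.ofReal (ρ ^ finrank ℝ E)) ^ (θ / 2) := by
  set S := {y | f y ≤ t}
  set B := ψ ⁻¹' closedBall c ρ
  set k : α → ℝ≥0∞ := fun y => ‖c - ψ y‖ₑ ^ (-(θ * finrank ℝ E))
  have hB : MeasurableSet B := hψ measurableSet_closedBall
  have hnear : ∫⁻ y in S ∩ B, f y * k y ∂μ ≤ t * ∫⁻ y in B, k y ∂μ := by
    rw [← lintegral_const_mul _ (by fun_prop)]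
    exact (setLIntegral_mono (by fun_prop) fun y hy => mul_le_mul_left hy.1 _).trans
      (lintegral_mono_set inter_subset_right)
  have hball := (setLIntegral_preimage_comp_le_of_map_le hψ hμ
    (measurableSet_closedBall (x := c) (ε := ρ))
    (show Measurable fun u => ‖c - u‖ₑ ^ (-(θ * finrank ℝ E)) by fun_prop)).trans_eq
      (setLIntegral_closedBall_enorm_rpow ν hθ₁ hρ.le c)
  calc
    ∫⁻ y in S, f y * k y ∂μ = ∫⁻ y in S ∩ B, f y * k y ∂μ + ∫⁻ y in S \ B, f y * k y ∂μ :=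
      (lintegral_inter_add_sdiff _ _ hB).symm
    _ ≤ t * ∫⁻ y in B, k y ∂μ + ∫⁻ y in ψ ⁻¹' (closedBall c ρ)ᶜ, f y * k y ∂μ :=
      add_le_add hnear (lintegral_mono_set fun y hy => hy.2)
    _ ≤ _ := add_le_add (mul_le_mul_right hball t)
      (setLIntegral_compl_closedBall_mul_enorm_rpow_le hθ₀ hθ₁ hψ hμ hf c hρ)

lemma two_mul_mul_setLIntegral_sublevel_le_of_ne_top (hθ₀ : 0 < θ) (hθ₁ : θ < 1)
    (hψ : Measurable ψ) (hμ : μ.map ψ ≤ ν) (hf : Measurable f)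
    (hN₀ : ∫⁻ y, f y ^ (2 / (2 - θ)) ∂μ ≠ 0)
    (hN : ∫⁻ y, f y ^ (2 / (2 - θ)) ∂μ ≠ ∞) (c : E) {t : ℝ≥0∞} (ht₀ : t ≠ 0) (ht : t ≠ ∞) :
    2 * (t * ∫⁻ y in {y | f y ≤ t}, f y * ‖c - ψ y‖ₑ ^ (-(θ * finrank ℝ E)) ∂μ) ≤
      hlsConst ν θ * ((∫⁻ y, f y ^ (2 / (2 - θ)) ∂μ) ^ (1 - θ) * t ^ (2 / (2 - θ))) := by
  have hθ₂ : 2 - θ ≠ 0 := by linarith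
  set N := ∫⁻ y, f y ^ (2 / (2 - θ)) ∂μ
  set V := ν (ball 0 1)
  set M := N / t ^ (2 / (2 - θ))
  have hM₀ : M ≠ 0 := by simp [M, ENNReal.div_eq_zero_iff, *]
  have hM : M ≠ ∞ := ENNReal.div_ne_top hN (by simp [*])
  -- At this radius the parts inside and outside the ball have the same size up to constants.
  obtain ⟨ρ, hρ, hρM⟩ := exists_pos_ofReal_pow_eq hM₀ hM (finrank_pos (R := ℝ) (M := E)).ne'
  have hnear : t ^ (2 : ℝ) * N ^ (0 : ℝ) * M ^ (1 - θ) = N ^ (1 - θ) * t ^ (2 / (2 - θ)) := by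
    rw [rpow_mul_rpow_mul_div_rpow hN₀ hN ht₀ ht, zero_add]
    congr 2
    field_simp
    ring
  have hfar : t ^ (1 : ℝ) * N ^ (1 - θ / 2) * M ^ (-(θ / 2)) =
      N ^ (1 - θ) * t ^ (2 / (2 - θ)) := by
    rw [rpow_mul_rpow_mul_div_rpow hN₀ hN ht₀ ht]
    congr 2 <;> field_simp <;> ring
  calc
    _ ≤ 2 * (t * (t * (V / ENNReal.ofReal (1 - θ) * M ^ (1 - θ)) +
          N ^ (1 - θ / 2) * (V / M) ^ (θ / 2))) := by
      rw [← hρM]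
      gcongr
      exact setLIntegral_sublevel_mul_enorm_rpow_le hθ₀ hθ₁ hψ hμ hf c t hρ
    _ = 2 * (V / ENNReal.ofReal (1 - θ) * (t ^ (2 : ℝ) * N ^ (0 : ℝ) * M ^ (1 - θ)) +
          V ^ (θ / 2) * (t ^ (1 : ℝ) * N ^ (1 - θ / 2) * M ^ (-(θ / 2)))) := by
      rw [div_eq_mul_inv V M, ENNReal.mul_rpow_of_nonneg _ _ (by positivity), ENNReal.inv_rpow,
        ← ENNReal.rpow_neg, ENNReal.rpow_two, ENNReal.rpow_zero, ENNReal.rpow_one]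
      ring
    _ = _ := by rw [hnear, hfar, hlsConst, ← add_mul, mul_assoc]

lemma two_mul_mul_setLIntegral_sublevel_le (hθ₀ : 0 < θ) (hθ₁ : θ < 1) (hψ : Measurable ψ)
    (hμ : μ.map ψ ≤ ν) (hf : Measurable f) (c : E) (t : ℝ≥0∞) :
    2 * (t * ∫⁻ y in {y | f y ≤ t}, f y * ‖c - ψ y‖ₑ ^ (-(θ * finrank ℝ E)) ∂μ) ≤
      hlsConst ν θ * ((∫⁻ y, f y ^ (2 / (2 - θ)) ∂μ) ^ (1 - θ) * t ^ (2 / (2 - θ))) := by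
  have hp : 0 < 2 / (2 - θ) := div_pos two_pos (by linarith)
  have hθ' : 0 < 1 - θ := sub_pos.2 hθ₁
  rcases eq_or_ne t 0 with rfl | ht₀
  · simp
  rcases eq_or_ne (∫⁻ y, f y ^ (2 / (2 - θ)) ∂μ) 0 with hN₀ | hN₀
  · have hf₀ : f =ᵐ[μ] 0 := by
      filter_upwards [(lintegral_eq_zero_iff (by fun_prop)).1 hN₀] with y hy
      simpa [hp, hp.not_gt] using hy
    have hzero : ∫⁻ y in {y | f y ≤ t}, f y * ‖c - ψ y‖ₑ ^ (-(θ * finrank ℝ E)) ∂μ = 0 := by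
      refine lintegral_eq_zero_of_ae_eq_zero (ae_restrict_of_ae ?_)
      filter_upwards [hf₀] with y hy
      simp [hy]
    simp [hzero]
  by_cases htop : ∫⁻ y, f y ^ (2 / (2 - θ)) ∂μ = ∞ ∨ t = ∞
  · have hrhs : (∫⁻ y, f y ^ (2 / (2 - θ)) ∂μ) ^ (1 - θ) * t ^ (2 / (2 - θ)) = ∞ := by
      rcases htop with h | h <;>
        simp [h, ENNReal.rpow_eq_zero_iff, ht₀, hN₀, hp, hθ', hp.not_gt, hθ'.not_gt]
    rw [hrhs, ENNReal.mul_top hlsConst_ne_zero]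
    exact le_top
  · rw [not_or] at htop
    exact two_mul_mul_setLIntegral_sublevel_le_of_ne_top hθ₀ hθ₁ hψ hμ hf hN₀ htop.1 c ht₀ htop.2

theorem lintegral_prod_mul_mul_enorm_rpow_le_of_pos [SFinite μ] (hθ₀ : 0 < θ) (hθ₁ : θ < 1)
    (hψ : Measurable ψ) (hμ : μ.map ψ ≤ ν) (hf : Measurable f) :
    ∫⁻ z, f z.1 * f z.2 * ‖ψ z.1 - ψ z.2‖ₑ ^ (-(θ * finrank ℝ E)) ∂μ.prod μ ≤
      hlsConst ν θ * (∫⁻ x, f x ^ (2 / (2 - θ)) ∂μ) ^ (2 - θ) := by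
  set N := ∫⁻ x, f x ^ (2 / (2 - θ)) ∂μ
  set k : α → α → ℝ≥0∞ := fun x y => ‖ψ x - ψ y‖ₑ ^ (-(θ * finrank ℝ E))
  set S : Set (α × α) := {z | f z.2 ≤ f z.1}
  have hS : MeasurableSet S := measurableSet_le (by fun_prop) (by fun_prop)
  have hk : Measurable fun z : α × α => f z.1 * f z.2 * k z.1 z.2 := by fun_prop
  have hpow : N ^ (1 - θ) * N = N ^ (2 - θ) := by
    rw [show 2 - θ = 1 - θ + 1 by ring, ENNReal.rpow_add_of_nonneg _ _ (by linarith) one_pos.le,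
      ENNReal.rpow_one]
  calc
    ∫⁻ z, f z.1 * f z.2 * k z.1 z.2 ∂μ.prod μ
        ≤ 2 * ∫⁻ z in S, f z.1 * f z.2 * k z.1 z.2 ∂μ.prod μ :=
      lintegral_prod_le_two_mul_setLIntegral_of_symm f fun z => by
        simp only [k, Prod.fst_swap, Prod.snd_swap, enorm_sub_rev (ψ z.2), mul_comm (f z.2)]
    _ = 2 * ∫⁻ x, ∫⁻ y in {y | f y ≤ f x}, f x * f y * k x y ∂μ ∂μ := by
      rw [← lintegral_indicator hS, lintegral_prod _ (hk.indicator hS).aemeasurable]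
      congr 2 with x
      exact lintegral_indicator (measurable_prodMk_left hS) fun y => f x * f y * k x y
    _ = ∫⁻ x, 2 * (f x * ∫⁻ y in {y | f y ≤ f x}, f y * k x y ∂μ) ∂μ := by
      rw [← lintegral_const_mul' _ _ ENNReal.ofNat_ne_top]
      congr 2 with x
      simp only [mul_assoc]
      rw [lintegral_const_mul _ (by fun_prop)]
    _ ≤ ∫⁻ x, hlsConst ν θ * (N ^ (1 - θ) * f x ^ (2 / (2 - θ))) ∂μ :=
      lintegral_mono fun x => two_mul_mul_setLIntegral_sublevel_le hθ₀ hθ₁ hψ hμ hf (ψ x) (f x)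
    _ = hlsConst ν θ * N ^ (2 - θ) := by
      rw [lintegral_const_mul _ (by fun_prop), lintegral_const_mul _ (by fun_prop), hpow]

theorem lintegral_prod_mul_mul_enorm_rpow_le [SFinite μ] (hθ₀ : 0 ≤ θ) (hθ₁ : θ < 1)
    (hψ : Measurable ψ) (hμ : μ.map ψ ≤ ν) (hf : Measurable f) :
    ∫⁻ z, f z.1 * f z.2 * ‖ψ z.1 - ψ z.2‖ₑ ^ (-(θ * finrank ℝ E)) ∂μ.prod μ ≤
      hlsConst ν θ * (∫⁻ x, f x ^ (2 / (2 - θ)) ∂μ) ^ (2 - θ) := by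
  rcases hθ₀.eq_or_lt with rfl | hθ_pos
  · simpa [lintegral_prod_mul hf.aemeasurable hf.aemeasurable, sq] using
      le_mul_of_one_le_left' one_le_hlsConst_zero
  · exact lintegral_prod_mul_mul_enorm_rpow_le_of_pos hθ_pos hθ₁ hψ hμ hf

end HardyLittlewoodSobolev

section ConvexPhase

lemma map_withDensity_deriv_le_volume_of_monotoneOn {s : Set ℝ} (hs : MeasurableSet s)
    {ψ κ : ℝ → ℝ} (hψ : Measurable ψ) (hderiv : ∀ x ∈ s, HasDerivWithinAt ψ (κ x) s x)
    (hmono : MonotoneOn ψ s) :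
    ((volume.restrict s).withDensity fun x => ENNReal.ofReal (κ x)).map ψ ≤ volume := by
  refine Measure.le_iff.2 fun t ht => ?_
  have hpre : MeasurableSet (ψ ⁻¹' t) := hψ ht
  calc
    _ = ∫⁻ x in s, ENNReal.ofReal (κ x) * t.indicator 1 (ψ x) := by
      rw [Measure.map_apply hψ ht, withDensity_apply _ hpre, ← lintegral_indicator hpre]
      congr with x
      by_cases hx : ψ x ∈ t <;> simp [hx]
    _ = ∫⁻ u in ψ '' s, t.indicator 1 u :=
      (lintegral_image_eq_lintegral_deriv_mul_of_monotoneOn hs hderiv hmono _).symm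
    _ ≤ ∫⁻ u, t.indicator 1 u := setLIntegral_le_lintegral _ _
    _ = volume t := lintegral_indicator_one ht

lemma setLIntegral_deriv_mul_deriv_mul_enorm_rpow_le_of_monotoneOn {s : Set ℝ}
    (hs : MeasurableSet s) {ψ κ : ℝ → ℝ} (hψ : Measurable ψ) (hκ : Measurable κ)
    (hderiv : ∀ x ∈ s, HasDerivWithinAt ψ (κ x) s x) (hmono : MonotoneOn ψ s)
    {f : ℝ → ℝ≥0∞} (hf : Measurable f) {θ : ℝ} (hθ₀ : 0 ≤ θ) (hθ₁ : θ < 1) :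
    ∫⁻ z in s ×ˢ s, ENNReal.ofReal (κ z.1) * ENNReal.ofReal (κ z.2) *
        (f z.1 * f z.2 * ‖ψ z.1 - ψ z.2‖ₑ ^ (-θ)) ≤
      hlsConst (volume : Measure ℝ) θ *
        (∫⁻ x in s, ENNReal.ofReal (κ x) * f x ^ (2 / (2 - θ))) ^ (2 - θ) := by
  have hls := lintegral_prod_mul_mul_enorm_rpow_le hθ₀ hθ₁ hψ
    (map_withDensity_deriv_le_volume_of_monotoneOn hs hψ hderiv hmono) hf
  rw [prod_withDensity (by fun_prop) (by fun_prop), Measure.prod_restrict,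
    lintegral_withDensity_eq_lintegral_mul _ (by fun_prop) (by fun_prop),
    lintegral_withDensity_eq_lintegral_mul _ (by fun_prop) (by fun_prop)] at hls
  simpa only [finrank_self, Nat.cast_one, mul_one, Pi.mul_apply, Measure.volume_eq_prod] using hls

lemma ofReal_mul_ofReal_rpow_eq {r : ℝ} (hr : r < 3) {a k : ℝ} (ha : 0 ≤ a) (hk : 0 < k) :
    ENNReal.ofReal k * ENNReal.ofReal (a ^ r * k ^ (r / 3 - 1)) ^ (2 / (3 - r)) =
      ENNReal.ofReal (a ^ (2 * r / (3 - r)) * k ^ ((1 : ℝ) / 3)) := by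
  have hr' : 0 < 3 - r := sub_pos.2 hr
  have hexp : 1 + (r / 3 - 1) * (2 / (3 - r)) = 1 / 3 := by
    field_simp
    ring
  have hpow : k * k ^ ((r / 3 - 1) * (2 / (3 - r))) = k ^ ((1 : ℝ) / 3) := by
    rw [← hexp, Real.rpow_add hk, Real.rpow_one]
  rw [ENNReal.ofReal_rpow_of_nonneg (by positivity) (by positivity), ← ENNReal.ofReal_mul hk.le,
    Real.mul_rpow (by positivity) (by positivity), ← Real.rpow_mul ha, ← Real.rpow_mul hk.le,
    mul_left_comm, hpow]
  congr 3
  ring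

lemma ofReal_div_abs_rpow_le {x : ℝ} (hx : 0 ≤ x) (D θ : ℝ) :
    ENNReal.ofReal (x / |D| ^ θ) ≤ ENNReal.ofReal x * ‖D‖ₑ ^ (-θ) := by
  -- At `D = 0` the left side is `x / 0 = 0`, unless `θ = 0`, where both sides are `ofReal x`.
  rcases eq_or_ne D 0 with rfl | hD
  · rcases eq_or_ne θ 0 with rfl | hθ
    · simp
    · simp [Real.zero_rpow hθ]
  · have hD' : 0 < |D| := abs_pos.2 hD
    rw [div_eq_mul_inv, ← Real.rpow_neg hD'.le, ENNReal.ofReal_mul hx, Real.enorm_eq_ofReal_abs,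
      ENNReal.ofReal_rpow_of_pos hD']

lemma ofReal_div_abs_rpow_le_mul {r a b k l : ℝ} (ha : 0 ≤ a) (hb : 0 ≤ b) (hk : 0 < k)
    (hl : 0 < l) (D θ : ℝ) :
    ENNReal.ofReal (a ^ r * b ^ r * k ^ (r / 3) * l ^ (r / 3) / |D| ^ θ) ≤
      ENNReal.ofReal k * ENNReal.ofReal l *
        (ENNReal.ofReal (a ^ r * k ^ (r / 3 - 1)) * ENNReal.ofReal (b ^ r * l ^ (r / 3 - 1)) *
          ‖D‖ₑ ^ (-θ)) := by
  have hweight : a ^ r * b ^ r * k ^ (r / 3) * l ^ (r / 3) =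
      k * (l * (a ^ r * k ^ (r / 3 - 1) * (b ^ r * l ^ (r / 3 - 1)))) := by
    rw [Real.rpow_sub_one hk.ne', Real.rpow_sub_one hl.ne']
    field_simp
  refine (ofReal_div_abs_rpow_le (by positivity) D θ).trans_eq ?_
  rw [hweight, ENNReal.ofReal_mul hk.le, ENNReal.ofReal_mul hl.le,
    ENNReal.ofReal_mul (by positivity)]
  ring

lemma setLIntegral_rpow_mul_div_abs_sub_rpow_le_of_monotoneOn {E : Type*}
    [SeminormedAddCommGroup E] [MeasurableSpace E] [OpensMeasurableSpace E] {r : ℝ} (hr1 : 1 ≤ r)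
    (hr2 : r < 2) {s : Set ℝ} (hs : MeasurableSet s) {ψ κ : ℝ → ℝ} (hψ : Measurable ψ)
    (hκ : Measurable κ) (hpos : ∀ x ∈ s, 0 < κ x)
    (hderiv : ∀ x ∈ s, HasDerivWithinAt ψ (κ x) s x) (hmono : MonotoneOn ψ s) {g : ℝ → E}
    (hg : Measurable g) :
    ∫⁻ p in s ×ˢ s, ENNReal.ofReal ((‖g p.1‖ ^ r * ‖g p.2‖ ^ r * κ p.1 ^ (r / 3) *
        κ p.2 ^ (r / 3)) / |ψ p.1 - ψ p.2| ^ (r - 1)) ≤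
      hlsConst (volume : Measure ℝ) (r - 1) *
        (∫⁻ x in s, ENNReal.ofReal (‖g x‖ ^ (2 * r / (3 - r)) * κ x ^ ((1 : ℝ) / 3)))
          ^ (3 - r) := by
  set F : ℝ → ℝ≥0∞ := fun x => ENNReal.ofReal (‖g x‖ ^ r * κ x ^ (r / 3 - 1))
  have hF : Measurable F := by fun_prop
  have hexp : 2 - (r - 1) = 3 - r := by ring
  calc
    _ ≤ ∫⁻ p in s ×ˢ s, ENNReal.ofReal (κ p.1) * ENNReal.ofReal (κ p.2) *
          (F p.1 * F p.2 * ‖ψ p.1 - ψ p.2‖ₑ ^ (-(r - 1))) :=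
      setLIntegral_mono' (hs.prod hs) fun p hp => ofReal_div_abs_rpow_le_mul (norm_nonneg _)
        (norm_nonneg _) (hpos _ hp.1) (hpos _ hp.2) _ _
    _ ≤ hlsConst (volume : Measure ℝ) (r - 1) *
          (∫⁻ x in s, ENNReal.ofReal (κ x) * F x ^ (2 / (2 - (r - 1)))) ^ (2 - (r - 1)) :=
      setLIntegral_deriv_mul_deriv_mul_enorm_rpow_le_of_monotoneOn hs hψ hκ hderiv hmono hF
        (sub_nonneg.2 hr1) (by linarith)
    _ = _ := by
      rw [hexp, setLIntegral_congr_fun hs fun x hx =>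
        ofReal_mul_ofReal_rpow_eq (by linarith) (norm_nonneg (g x)) (hpos x hx)]

lemma measurableSet_sep_pos_of_hasDerivAt {I : Set ℝ} (hI : IsOpen I) {f f' : ℝ → ℝ}
    (hf : ∀ x ∈ I, HasDerivAt f (f' x) x) : MeasurableSet {x ∈ I | 0 < f' x} := by
  have heq : {x ∈ I | 0 < f' x} = I ∩ {x | 0 < deriv f x} :=
    ext fun x => and_congr_right fun hx => by rw [← (hf x hx).deriv]; rfl
  rw [heq]
  exact hI.measurableSet.inter (measurableSet_lt measurable_const (measurable_deriv f))

end ConvexPhase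

theorem maximal_restriction_stmt14_general {E : Type*} [SeminormedAddCommGroup E]
    [MeasurableSpace E] [OpensMeasurableSpace E] {r : ℝ} (hr1 : 1 ≤ r) (hr2 : r < 2) {I : Set ℝ}
    (hI : IsOpen I) {φ : ℝ → ℝ} (hφ : DifferentiableOn ℝ φ I) (hconv : ConvexOn ℝ I φ)
    {κ : ℝ → ℝ} (hκ : ∀ x ∈ I, HasDerivAt (deriv φ) (κ x) x) {U : Set ℝ}
    (hU : U = {x ∈ I | 0 < κ x}) {g : ℝ → E} (hg : Measurable g) :
    ∫⁻ p in {p : ℝ × ℝ | p.1 ∈ U ∧ p.2 ∈ U ∧ p.1 ≠ p.2},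
        ENNReal.ofReal ((‖g p.1‖ ^ r * ‖g p.2‖ ^ r * κ p.1 ^ (r / 3) * κ p.2 ^ (r / 3))
          / |deriv φ p.1 - deriv φ p.2| ^ (r - 1)) ≤
      hlsConst (volume : Measure ℝ) (r - 1) *
        (∫⁻ x in U, ENNReal.ofReal (‖g x‖ ^ (2 * r / (3 - r)) * κ x ^ ((1 : ℝ) / 3)))
          ^ (3 - r) := by
  have hUI : U ⊆ I := hU ▸ sep_subset I _
  have hU_meas : MeasurableSet U := hU ▸ measurableSet_sep_pos_of_hasDerivAt hI hκ
  have hmono : MonotoneOn (deriv φ) U :=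
    (hconv.monotoneOn_deriv fun x hx => hφ.differentiableAt (hI.mem_nhds hx)).mono hUI
  -- `κ` is only constrained on `I`; the second derivative is a globally measurable version of it.
  have hk : ∀ x ∈ U, deriv (deriv φ) x = κ x := fun x hx => (hκ x (hUI hx)).deriv
  have hpos : ∀ x ∈ U, 0 < deriv (deriv φ) x := fun x hx => by
    rw [hk x hx]
    exact (hU ▸ hx).2
  have hbound := setLIntegral_rpow_mul_div_abs_sub_rpow_le_of_monotoneOn hr1 hr2 hU_meas
    (measurable_deriv φ) (measurable_deriv (deriv φ)) hpos
    (fun x hx => hk x hx ▸ (hκ x (hUI hx)).hasDerivWithinAt) hmono hg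
  rw [setLIntegral_congr_fun hU_meas fun x hx => by rw [hk x hx],
    setLIntegral_congr_fun (hU_meas.prod hU_meas) fun p hp => by
      rw [hk p.1 hp.1, hk p.2 hp.2]] at hbound
  have hsub : {p : ℝ × ℝ | p.1 ∈ U ∧ p.2 ∈ U ∧ p.1 ≠ p.2} ⊆ U ×ˢ U := fun p hp => ⟨hp.1, hp.2.1⟩
  exact (lintegral_mono_set hsub).trans hbound

/-- the Hardy–Littlewood–Sobolev-type estimate, after the change of
variables `u = φ'(x)`, `v = φ'(y)`, for a convex `C²` function `φ` on a bounded open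
interval, with `κ = φ''` and `U = {κ > 0}`.  The constant depends only on
`r ∈ [1, 2)`.  Stated with (extended-real) lower integrals so that both sides always
make sense. -/
theorem maximal_restriction_stmt14 (r : ℝ) (hr1 : 1 ≤ r) (hr2 : r < 2) :
    ∃ C : ℝ, 0 < C ∧
      ∀ (a b : ℝ), a < b →
      ∀ (φ : ℝ → ℝ), ContDiffOn ℝ 2 φ (Ioo a b) → ConvexOn ℝ (Ioo a b) φ →
      ∀ (κ : ℝ → ℝ), (∀ x ∈ Ioo a b, κ x = deriv (deriv φ) x) →
      ∀ (U : Set ℝ), U = {x ∈ Ioo a b | 0 < κ x} →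
      ∀ g : ℝ → ℂ, Measurable g →
        (∫⁻ p in {p : ℝ × ℝ | p.1 ∈ U ∧ p.2 ∈ U ∧ p.1 ≠ p.2},
            ENNReal.ofReal ((‖g p.1‖ ^ r * ‖g p.2‖ ^ r * κ p.1 ^ (r / 3) * κ p.2 ^ (r / 3))
              / |deriv φ p.1 - deriv φ p.2| ^ (r - 1)))
          ≤ ENNReal.ofReal C *
            (∫⁻ x in U, ENNReal.ofReal (‖g x‖ ^ (2 * r / (3 - r)) * κ x ^ ((1 : ℝ) / 3)))
              ^ (3 - r) := by
  have hC : hlsConst (volume : Measure ℝ) (r - 1) ≠ ∞ :=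
    hlsConst_ne_top (sub_nonneg.2 hr1) (by linarith)
  refine ⟨_, ENNReal.toReal_pos hlsConst_ne_zero hC, fun a b _ φ hφ hconv κ hκ U hU g hg => ?_⟩
  have hderiv : DifferentiableOn ℝ (deriv φ) (Ioo a b) :=
    (hφ.deriv_of_isOpen isOpen_Ioo one_add_one_eq_two.le).differentiableOn one_ne_zero
  rw [ENNReal.ofReal_toReal hC]
  exact maximal_restriction_stmt14_general hr1 hr2 isOpen_Ioo (hφ.differentiableOn two_ne_zero)
    hconv (fun x hx => hκ x hx ▸ (hderiv.differentiableAt (Ioo_mem_nhds hx.1 hx.2)).hasDerivAt)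
    hU hg
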